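/- The automorphism group of the graph Π_I has cardinality exactly 60. -/

import Mathlib

/-- The ten faces of the hemi-icosahedron on vertex set `Fin 6`. -/
def faces : Finset (Finset (Fin 6)) :=
  {{0,1,2}, {0,2,3}, {0,3,4}, {0,4,5}, {0,5,1}, {1,2,4}, {2,3,5}, {1,3,4}, {2,4,5}, {1,3,5}}

/-- The 16-element vertex set: `Fin 6` together with the ten faces. -/
abbrev V16 := Fin 6 ⊕ {f : Finset (Fin 6) // f ∈ faces}

/-- Vertex-face incidence: `v : Fin 6` is incident to a face `f` iff `v ∈ f`. -/
def piRel : V16 → V16 → Prop := fun a b =>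
  match a, b with
  | Sum.inl v, Sum.inr f => v ∈ f.1
  | _, _ => False

instance : DecidableRel piRel := fun a b =>
  match a, b with
  | Sum.inl v, Sum.inr f => inferInstanceAs (Decidable (v ∈ f.1))
  | Sum.inl _, Sum.inl _ => Decidable.isFalse id
  | Sum.inr _, Sum.inl _ => Decidable.isFalse id
  | Sum.inr _, Sum.inr _ => Decidable.isFalse id

/-- `Π_I`, the projective vertex-face graph of the icosahedron (vertex-face graph of
the hemi-icosahedron): `v : Fin 6` is adjacent to `f ∈ faces` iff `v ∈ f`. -/
def piI : SimpleGraph V16 := SimpleGraph.fromRel piRel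

instance : DecidableRel piI.Adj := fun a b =>
  decidable_of_iff _ (SimpleGraph.fromRel_adj piRel a b).symm

/-!
The points of `Π_I` have degree 5 and the faces degree 3, so an automorphism of `Π_I` is the same
thing as a permutation of the six points that preserves the set of faces. The group of these
permutations acts simply transitively on the 60 flags of the hemi-icosahedron: freely because every
edge lies in only two faces, so that fixing a flag fixes its three neighbours across an edge and
hence everything; transitively because the five-fold rotation about a point, a half-turn
interchanging the ends of an edge and a reflection fixing them generate enough symmetries.
-/

open Equiv MulAction Finset
open scoped Pointwise

section IncidenceGraph

variable {α β : Type*}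

theorem mapsTo_range_inl_of_degree_ne {G : SimpleGraph (α ⊕ β)} [G.LocallyFinite]
    (hG : ∀ a b, G.degree (.inl a) ≠ G.degree (.inr b)) (φ : G ≃g G) :
    Set.MapsTo φ (Set.range Sum.inl) (Set.range Sum.inl) := by
  rintro _ ⟨a, rfl⟩
  have hdegree : G.degree (φ (.inl a)) = G.degree (.inl a) := φ.degree_eq _
  cases hφ : φ (.inl a) with
  | inl a' => exact ⟨a', rfl⟩
  | inr b => exact absurd (hφ ▸ hdegree).symm (hG a b)

/-- The bipartite incidence graph of a set system `S`: points on the left, members of `S` on the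
right, and a point joined to the members containing it. -/
def incidenceGraph (S : Finset (Finset α)) : SimpleGraph (α ⊕ {f // f ∈ S}) :=
  SimpleGraph.fromRel fun
    | .inl a, .inr f => a ∈ f.1
    | _, _ => False

variable {S : Finset (Finset α)}

@[simp]
theorem incidenceGraph_adj_inl_inr {a : α} {f : {f // f ∈ S}} :
    (incidenceGraph S).Adj (.inl a) (.inr f) ↔ a ∈ f.1 := by
  simp [incidenceGraph]

@[simp]
theorem incidenceGraph_adj_inr_inl {a : α} {f : {f // f ∈ S}} :
    (incidenceGraph S).Adj (.inr f) (.inl a) ↔ a ∈ f.1 := by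
  simp [incidenceGraph]

@[simp]
theorem not_incidenceGraph_adj_inl_inl {a b : α} :
    ¬ (incidenceGraph S).Adj (.inl a) (.inl b) := by
  simp [incidenceGraph]

@[simp]
theorem not_incidenceGraph_adj_inr_inr {f g : {f // f ∈ S}} :
    ¬ (incidenceGraph S).Adj (.inr f) (.inr g) := by
  simp [incidenceGraph]

variable [DecidableEq α]

/-- The action on the incidence graph of `S` of the automorphism group of `S`, which is encoded as
the stabilizer of `S` in the group of permutations of the points. -/
def stabilizerToIncidenceGraphAut (S : Finset (Finset α)) :
    stabilizer (Perm α) S →* (incidenceGraph S ≃g incidenceGraph S) where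
  toFun σ :=
    { toEquiv := Equiv.sumCongr σ ((MulAction.toPerm σ).subtypePerm (mem_stabilizer_finset.1 σ.2))
      map_rel_iff' := by
        rintro (a | f) (b | g)
        · simp
        · exact incidenceGraph_adj_inl_inr.trans <|
            (smul_mem_smul_finset_iff σ).trans incidenceGraph_adj_inl_inr.symm
        · exact incidenceGraph_adj_inr_inl.trans <|
            (smul_mem_smul_finset_iff σ).trans incidenceGraph_adj_inr_inl.symm
        · simp }
  map_one' := by
    ext (a | f)
    · rfl
    · exact congrArg Sum.inr (Subtype.ext (one_smul (stabilizer (Perm α) S) f.1))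
  map_mul' σ τ := by
    ext (a | f)
    · rfl
    · exact congrArg Sum.inr (Subtype.ext (mul_smul σ τ f.1))

theorem stabilizerToIncidenceGraphAut_injective :
    Function.Injective (stabilizerToIncidenceGraphAut S) := by
  intro σ τ h
  ext a
  exact Sum.inl_injective (DFunLike.congr_fun h (.inl a))

theorem stabilizerToIncidenceGraphAut_surjective [Finite α]
    (hS : ∀ φ : incidenceGraph S ≃g incidenceGraph S,
      Set.MapsTo φ (Set.range Sum.inl) (Set.range Sum.inl)) :
    Function.Surjective (stabilizerToIncidenceGraphAut S) := by
  intro φ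
  obtain ⟨⟨σ, τ⟩, hφ⟩ := Perm.mem_sumCongrHom_range_of_perm_mapsTo_inl (σ := φ.toEquiv) (hS φ)
  have hinl (a : α) : φ (.inl a) = .inl (σ a) := (DFunLike.congr_fun hφ (.inl a)).symm
  have hinr (f : {f // f ∈ S}) : φ (.inr f) = .inr (τ f) := (DFunLike.congr_fun hφ (.inr f)).symm
  have smul_eq (f : {f // f ∈ S}) : σ • f.1 = (τ f).1 := by
    ext a
    obtain ⟨b, rfl⟩ := σ.surjective a
    have hadj : σ b ∈ (τ f).1 ↔ b ∈ f.1 := by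
      simpa only [hinl, hinr, incidenceGraph_adj_inl_inr] using
        φ.map_adj_iff (v := .inl b) (w := .inr f)
    exact (smul_mem_smul_finset_iff σ).trans hadj.symm
  have hσ : σ ∈ stabilizer (Perm α) S :=
    mem_stabilizer_finset'.2 fun f hf => smul_eq ⟨f, hf⟩ ▸ (τ ⟨f, hf⟩).2
  refine ⟨⟨σ, hσ⟩, RelIso.ext ?_⟩
  rintro (a | f)
  · exact (hinl a).symm
  · rw [hinr]
    exact congrArg Sum.inr (Subtype.ext (smul_eq f))

theorem card_incidenceGraph_aut [Finite α]
    (hS : ∀ φ : incidenceGraph S ≃g incidenceGraph S,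
      Set.MapsTo φ (Set.range Sum.inl) (Set.range Sum.inl)) :
    Nat.card (incidenceGraph S ≃g incidenceGraph S) = Nat.card (stabilizer (Perm α) S) :=
  (Nat.card_eq_of_bijective _ ⟨stabilizerToIncidenceGraphAut_injective,
    stabilizerToIncidenceGraphAut_surjective hS⟩).symm

end IncidenceGraph

section Flags

variable {α : Type*} [DecidableEq α] {S : Finset (Finset α)}

theorem smul_triple_mem_iff (σ : stabilizer (Perm α) S) {a b c : α} :
    {σ • a, σ • b, σ • c} ∈ S ↔ {a, b, c} ∈ S := by
  rw [← mem_stabilizer_finset.1 σ.2 {a, b, c}, smul_finset_insert, smul_finset_insert,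
    smul_finset_singleton]
  rfl

variable [Fintype α]

/-- The thinness (or diamond) condition of polytope theory for a system `S` of triangles: at most
two triangles of `S` share an edge `{a, b}`, a triangle through it being counted by its third
vertex. -/
def IsThin (S : Finset (Finset α)) : Prop :=
  ∀ a b, #{c | {a, b, c} ∈ S} ≤ 2

instance : DecidablePred (IsThin (α := α)) := fun S =>
  inferInstanceAs (Decidable (∀ a b, #{c | {a, b, c} ∈ S} ≤ 2))

theorem IsThin.eq_or_eq (hS : IsThin S) {a b c d x : α} (hcd : c ≠ d) (hc : {a, b, c} ∈ S)
    (hd : {a, b, d} ∈ S) (hx : {a, b, x} ∈ S) : x = c ∨ x = d := by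
  by_contra! hne
  refine (hS a b).not_gt (two_lt_card.2 ⟨c, ?_, d, ?_, x, ?_, hcd, hne.1.symm, hne.2.symm⟩) <;>
    simpa only [mem_filter_univ]

theorem IsThin.smul_eq_self (hS : IsThin S) {σ : stabilizer (Perm α) S} {a b c d : α}
    (hcd : c ≠ d) (hc : {a, b, c} ∈ S) (hd : {a, b, d} ∈ S)
    (ha : σ • a = a) (hb : σ • b = b) (hσc : σ • c = c) : σ • d = d := by
  have hσd : {a, b, σ • d} ∈ S := by
    simpa only [ha, hb] using (smul_triple_mem_iff σ).2 hd
  refine (hS.eq_or_eq hcd hc hd hσd).resolve_left fun h => hcd ?_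
  exact smul_left_cancel σ (hσc.trans h.symm)

/-- The flags of a system `S` of triangles: the flag with vertex `a`, edge `{a, b}` and triangle
`{a, b, c}` is encoded as the ordered triple `(a, b, c)`. -/
def flags (S : Finset (Finset α)) : Finset (α × α × α) :=
  {t | {t.1, t.2.1, t.2.2} ∈ S}

theorem mem_flags {a b c : α} : (a, b, c) ∈ flags S ↔ {a, b, c} ∈ S :=
  mem_filter_univ _

end Flags

theorem card_eq_ncard_orbit_of_stabilizer_eq_bot {G X : Type*} [Group G] [MulAction G X] {x : X}
    (hx : stabilizer G x = ⊥) : Nat.card G = (orbit G x).ncard := by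
  rw [← index_stabilizer, hx, Subgroup.index_bot]

section HemiIcosahedron

/-- The automorphism group of the hemi-icosahedron, as a group of permutations of its vertices. -/
abbrev facesAut : Subgroup (Perm (Fin 6)) :=
  stabilizer (Perm (Fin 6)) faces

namespace facesAut

/-- The five-fold rotation about the vertex `0`. -/
def rotation : facesAut :=
  ⟨c[1, 2, 3, 4, 5], mem_stabilizer_iff.2 (by decide)⟩

/-- The half-turn that interchanges the ends of the edge `{0, 1}` and fixes the vertex `2`, which
spans a face with this edge. -/
def halfTurn : facesAut :=
  ⟨swap 0 1 * swap 3 4, mem_stabilizer_iff.2 (by decide)⟩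

/-- The reflection that fixes the edge `{0, 1}` pointwise and interchanges the two faces
`{0, 1, 2}` and `{0, 1, 5}` through it. -/
def reflection : facesAut :=
  ⟨swap 2 5 * swap 3 4, mem_stabilizer_iff.2 (by decide)⟩

theorem rotation_pow_smul_zero (k : ℕ) : rotation ^ k • (0 : Fin 6) = 0 :=
  (stabilizer facesAut (0 : Fin 6)).pow_mem (mem_stabilizer_iff.2 (by decide)) k

theorem exists_rotation_pow_smul_one_eq {b : Fin 6} (hb : b ≠ 0) :
    ∃ k : ℕ, rotation ^ k • (1 : Fin 6) = b := by
  have : ∀ b : Fin 6, b ≠ 0 → ∃ k : Fin 5, rotation ^ k.1 • (1 : Fin 6) = b := by decide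
  obtain ⟨k, hk⟩ := this b hb
  exact ⟨k, hk⟩

theorem exists_smul_zero_eq (a : Fin 6) : ∃ σ : facesAut, σ • (0 : Fin 6) = a := by
  obtain rfl | ha := eq_or_ne a 0
  · exact ⟨1, one_smul _ _⟩
  · obtain ⟨k, hk⟩ := exists_rotation_pow_smul_one_eq ha
    have halfTurn_smul_zero : halfTurn • (0 : Fin 6) = 1 := by decide
    exact ⟨rotation ^ k * halfTurn, by rw [mul_smul, halfTurn_smul_zero, hk]⟩

theorem exists_smul_zero_eq_and_smul_one_eq {a b : Fin 6} (hab : a ≠ b) :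
    ∃ σ : facesAut, σ • (0 : Fin 6) = a ∧ σ • (1 : Fin 6) = b := by
  obtain ⟨σ, rfl⟩ := exists_smul_zero_eq a
  obtain ⟨k, hk⟩ := exists_rotation_pow_smul_one_eq (b := σ⁻¹ • b)
    fun h => hab (inv_smul_eq_iff.1 h).symm
  refine ⟨σ * rotation ^ k, ?_, ?_⟩
  · rw [mul_smul, rotation_pow_smul_zero]
  · rw [mul_smul, hk, smul_inv_smul]

end facesAut

open facesAut

theorem isThin_faces : IsThin faces := by
  decide

theorem ne_of_mem_faces {a b c : Fin 6} (h : {a, b, c} ∈ faces) : a ≠ b := by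
  rintro rfl
  have card_eq_three : ∀ f ∈ faces, #f = 3 := by decide
  have hle : #({a, a, c} : Finset (Fin 6)) ≤ 2 := by
    rw [insert_eq_of_mem (mem_insert_self a {c})]
    exact card_le_two
  exact absurd (card_eq_three _ h) (by lia)

theorem exists_smul_eq_of_mem_flags_faces {t : Fin 6 × Fin 6 × Fin 6} (ht : t ∈ flags faces) :
    ∃ σ : facesAut, σ • ((0, 1, 2) : Fin 6 × Fin 6 × Fin 6) = t := by
  obtain ⟨a, b, c⟩ := t
  rw [mem_flags] at ht
  obtain ⟨σ, rfl, rfl⟩ := exists_smul_zero_eq_and_smul_one_eq (ne_of_mem_faces ht)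
  have h2 : {σ • 0, σ • 1, σ • 2} ∈ faces := (smul_triple_mem_iff σ).2 (by decide)
  have h5 : {σ • 0, σ • 1, σ • 5} ∈ faces := (smul_triple_mem_iff σ).2 (by decide)
  have hne : σ • (2 : Fin 6) ≠ σ • 5 := (MulAction.injective σ).ne (by decide)
  obtain rfl | rfl := isThin_faces.eq_or_eq hne h2 h5 ht
  · exact ⟨σ, rfl⟩
  · have reflection_smul :
        reflection • ((0, 1, 2) : Fin 6 × Fin 6 × Fin 6) = (0, 1, 5) := by decide
    exact ⟨σ * reflection, by rw [mul_smul, reflection_smul]; rfl⟩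

theorem orbit_base_flag :
    orbit facesAut ((0, 1, 2) : Fin 6 × Fin 6 × Fin 6) = flags faces := by
  refine Set.Subset.antisymm ?_ fun t ht => exists_smul_eq_of_mem_flags_faces ht
  rintro _ ⟨σ, rfl⟩
  exact mem_flags.2 ((smul_triple_mem_iff σ).2 (by decide))

theorem stabilizer_base_flag :
    stabilizer facesAut ((0, 1, 2) : Fin 6 × Fin 6 × Fin 6) = ⊥ := by
  refine (Subgroup.eq_bot_iff_forall _).2 fun σ hσ => ?_
  simp only [mem_stabilizer_iff, Prod.smul_mk, Prod.mk.injEq] at hσ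
  obtain ⟨h0, h1, h2⟩ := hσ
  have h3 : σ • (3 : Fin 6) = 3 :=
    isThin_faces.smul_eq_self (by decide) (by decide) (by decide) h0 h2 h1
  have h4 : σ • (4 : Fin 6) = 4 :=
    isThin_faces.smul_eq_self (by decide) (by decide) (by decide) h1 h2 h0
  have h5 : σ • (5 : Fin 6) = 5 :=
    isThin_faces.smul_eq_self (by decide) (by decide) (by decide) h0 h1 h2
  ext v : 2
  fin_cases v <;> assumption

theorem card_flags_faces : #(flags faces) = 60 := by
  decide

theorem card_facesAut : Nat.card facesAut = 60 := by
  rw [card_eq_ncard_orbit_of_stabilizer_eq_bot stabilizer_base_flag, orbit_base_flag,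
    Set.ncard_coe_finset, card_flags_faces]

theorem piI_eq_incidenceGraph : piI = incidenceGraph faces := by
  ext (a | f) (b | g) <;> simp [piI, piRel]

theorem piI_degree_inl : ∀ a, piI.degree (.inl a) = 5 := by
  decide

theorem piI_degree_inr : ∀ f, piI.degree (.inr f) = 3 := by
  decide

theorem piI_aut_mapsTo_range_inl (φ : piI ≃g piI) :
    Set.MapsTo φ (Set.range Sum.inl) (Set.range Sum.inl) :=
  mapsTo_range_inl_of_degree_ne (fun a f => by simp [piI_degree_inl, piI_degree_inr]) φ

end HemiIcosahedron

/-- The automorphism group of `Π_I` has exactly 60 elements. -/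
theorem stmt_7 : Nat.card (piI ≃g piI) = 60 := by
  calc
    Nat.card (piI ≃g piI) = Nat.card (incidenceGraph faces ≃g incidenceGraph faces) := by
      rw [piI_eq_incidenceGraph]
    _ = Nat.card facesAut :=
      card_incidenceGraph_aut (piI_eq_incidenceGraph ▸ piI_aut_mapsTo_range_inl)
    _ = 60 := card_facesAut
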